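/- Let Λ be a cyclic Nakayama algebra given by an irredundant system of r monomial relations, with associated modules Δ = {Δ_1,…,Δ_r}. Then the sets of simple composition factors of distinct modules Δ_i and Δ_j (i ≠ j) are disjoint; moreover every simple Λ-module appears exactly once in the union of the composition factors of Δ_1,…,Δ_r. -/

import Mathlib

/-!
The composition factors of a uniserial module of length `n` with top `S a` are, from the top down,
`S a, S (a + 1), …, S (a + n - 1)` (`factor_iso`, `compFactor_iff`), because the radical of a module
with top `S i` has top `S (i + 1)`. If such a module has length greater than `N`, its submodule `N`
steps below the top has the same top and the same socle, so minimality forces `Δ_j` to have length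
`n_j ≤ N` (`delta_length_le`). Hence the factors of `Δ_j` are pairwise distinct and correspond to the
arc of vertices `k_{2(j-1)} + 1, …, k_{2j}`, and the theorem says that these arcs partition the cycle.

Each arc starts right after the previous one stops, so they cover the cycle. It remains to see that
`∑ n_j ≤ N`. Lifting `P_{v+1} → S_{v+1}` to `rad P_v` gives the inequality `c v ≤ c (v + 1) + 1`
(`kupisch`), so the jump `d v = c (v + 1) + 1 - c v` of `v ↦ v + c v` is nonnegative; it is nonzero
exactly at the starting vertices `k_{2j-1}`, and the sum of `d` over the cycle telescopes to `N`.
Since `v + c v` does not change strictly between consecutive starting vertices (`const_between`),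
`n_{j+1}` is congruent to `d (k_{2j-1}) ≥ 1` modulo `N`, whence `n_{j+1} ≤ d (k_{2j-1})`. Summing
over `j`, a surjection from a set of at most `N` elements onto the `N` vertices is a bijection
(`arcs_bijective`).
-/

/-!
Common definitions: Igusa–Todorov φ-function, syzygies, and cyclic Nakayama
algebras presented by monomial relations, following E. Sen,
"The φ-dimension of cyclic Nakayama algebras".
-/

noncomputable section

namespace PhiDim

variable (Λ : Type) [Ring Λ]

/-- A module is *uniserial* if its submodules are totally ordered by inclusion. -/
def IsUniserial (M : ModuleCat.{0} Λ) : Prop :=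
  ∀ N₁ N₂ : Submodule Λ M, N₁ ≤ N₂ ∨ N₂ ≤ N₁

/-- A module is *indecomposable* if it is nonzero and admits no nontrivial
direct sum decomposition. -/
def Indec (M : ModuleCat.{0} Λ) : Prop :=
  Nontrivial M ∧ ∀ N N' : Submodule Λ M, IsCompl N N' → N = ⊥ ∨ N' = ⊥

/-- `X` is (isomorphic to) a direct summand of `M`. -/
def IsSummand (X M : ModuleCat.{0} Λ) : Prop :=
  ∃ N N' : Submodule Λ M, IsCompl N N' ∧ Nonempty (X ≃ₗ[Λ] N)

/-- `f : P → M` is a projective cover: `P` is projective, `f` is surjective and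
its kernel is superfluous in `P`. -/
def IsProjCover {P M : ModuleCat.{0} Λ} (f : P →ₗ[Λ] M) : Prop :=
  Module.Projective Λ P ∧ Function.Surjective f ∧
    ∀ N : Submodule Λ P, N ⊔ LinearMap.ker f = ⊤ → N = ⊤

/-- `Y` is (isomorphic to) the first syzygy `Ω M`, i.e. the kernel of a
projective cover of `M`. -/
def IsSyzygy (Y M : ModuleCat.{0} Λ) : Prop :=
  ∃ (P : ModuleCat.{0} Λ) (f : P →ₗ[Λ] M), IsProjCover Λ f ∧
    Nonempty (Y ≃ₗ[Λ] LinearMap.ker f)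

/-- `Y` is (isomorphic to) the `n`-th syzygy `Ω^n M`. -/
def IsNthSyzygy : ℕ → ModuleCat.{0} Λ → ModuleCat.{0} Λ → Prop
  | 0, Y, M => Nonempty (Y ≃ₗ[Λ] M)
  | n + 1, Y, M => ∃ Z : ModuleCat.{0} Λ, IsSyzygy Λ Z M ∧ IsNthSyzygy n Y Z

/-- `M` is `Ω`-periodic: `Ω^k M ≅ M` for some `k ≥ 1`. -/
def IsPeriodic (M : ModuleCat.{0} Λ) : Prop :=
  ∃ k : ℕ, 1 ≤ k ∧ IsNthSyzygy Λ k M M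

/-- Projective dimension at most `n` (via minimal projective resolutions:
the `n`-th syzygy is projective). -/
def PdimLE (M : ModuleCat.{0} Λ) (n : ℕ) : Prop :=
  ∃ Y : ModuleCat.{0} Λ, IsNthSyzygy Λ n Y M ∧ Module.Projective Λ Y

/-- `M` has infinite projective dimension. -/
def HasInfinitePdim (M : ModuleCat.{0} Λ) : Prop :=
  ¬ ∃ n : ℕ, PdimLE Λ M n

/-- The (left) global dimension is at most `n`: every finitely generated module
has projective dimension at most `n`. -/
def GlobalDimLE (n : ℕ) : Prop :=
  ∀ M : ModuleCat.{0} Λ, Module.Finite Λ M → PdimLE Λ M n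

/-- `Λ` has infinite global dimension. -/
def HasInfiniteGlobalDim : Prop := ¬ ∃ n : ℕ, GlobalDimLE Λ n

/-- `M` has composition length `n`. -/
def HasLength (M : ModuleCat.{0} Λ) (n : ℕ) : Prop :=
  ∃ s : CompositionSeries (Submodule Λ M), s.head = ⊥ ∧ s.last = ⊤ ∧ s.length = n

/-- The socle of a uniserial module: the smallest nonzero submodule. -/
def socle (M : Type) [AddCommGroup M] [Module Λ M] : Submodule Λ M :=
  sInf {N : Submodule Λ M | N ≠ ⊥}

/-- The radical of a uniserial (local) module: the largest proper submodule. -/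
def radical (M : Type) [AddCommGroup M] [Module Λ M] : Submodule Λ M :=
  sSup {N : Submodule Λ M | N ≠ ⊤}

/-- `soc M ≅ T`. -/
def SocIso (M T : ModuleCat.{0} Λ) : Prop :=
  Nonempty (socle Λ M ≃ₗ[Λ] T)

/-- `top M = M / rad M ≅ T`. -/
def TopIso (M T : ModuleCat.{0} Λ) : Prop :=
  Nonempty ((M ⧸ radical Λ M) ≃ₗ[Λ] T)

/-- `T` is a composition factor (a simple subquotient) of `M`. -/
def IsCompFactorOf (T M : ModuleCat.{0} Λ) : Prop :=
  ∃ (N₁ : Submodule Λ M) (N₀ : Submodule Λ N₁),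
    Nonempty ((N₁ ⧸ N₀) ≃ₗ[Λ] T)

/-- The number of composition factors of a composition series `s` of `M`
isomorphic to `T`. -/
def factorCount (M : ModuleCat.{0} Λ) (s : CompositionSeries (Submodule Λ M))
    (T : ModuleCat.{0} Λ) : ℕ :=
  Nat.card {i : Fin s.length //
    Nonempty ((s i.succ ⧸ Submodule.comap (s i.succ).subtype (s i.castSucc)) ≃ₗ[Λ] T)}

/-! ### The Igusa–Todorov function φ -/

/-- Finitely generated modules. -/
def FGMod := {M : ModuleCat.{0} Λ // Module.Finite Λ M}

/-- Generators of the relations defining `K₀`: `[C] - [A] - [B]` for `C ≅ A ⊕ B`,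
and `[P]` for `P` projective. -/
def K0RelSet : Set (FreeAbelianGroup (FGMod Λ)) :=
  {x | ∃ A B C : FGMod Λ, Nonempty ((C.1 : Type) ≃ₗ[Λ] ((A.1 : Type) × (B.1 : Type))) ∧
        x = FreeAbelianGroup.of C - FreeAbelianGroup.of A - FreeAbelianGroup.of B} ∪
  {x | ∃ P : FGMod Λ, Module.Projective Λ P.1 ∧ x = FreeAbelianGroup.of P}

def K0Rel : AddSubgroup (FreeAbelianGroup (FGMod Λ)) :=
  AddSubgroup.closure (K0RelSet Λ)

/-- `K₀`: the free abelian group on finitely generated modules, modulo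
`[A ⊕ B] = [A] + [B]` and `[P] = 0` for projective `P`. -/
def K0 := FreeAbelianGroup (FGMod Λ) ⧸ K0Rel Λ

instance : AddCommGroup (K0 Λ) := QuotientAddGroup.Quotient.addCommGroup _

/-- The class `[M]` of a finitely generated module in `K₀`. -/
def classOf (M : FGMod Λ) : K0 Λ := QuotientAddGroup.mk (FreeAbelianGroup.of M)

/-- Generators of the subgroup `L^t ⟨add M⟩` of `K₀`: classes of `t`-th syzygies of
the indecomposable direct summands of `M`. -/
def addGens (M : ModuleCat.{0} Λ) (t : ℕ) : Set (K0 Λ) :=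
  {k | ∃ X : ModuleCat.{0} Λ, Indec Λ X ∧ IsSummand Λ X M ∧
        ∃ Y : FGMod Λ, IsNthSyzygy Λ t Y.1 X ∧ k = classOf Λ Y}

/-- The rank of `L^t ⟨add M⟩`. -/
def syzygyRank (M : ModuleCat.{0} Λ) (t : ℕ) : Cardinal :=
  Module.rank ℤ (AddSubgroup.closure (addGens Λ M t))

/-- The Igusa–Todorov function
`φ(M) = min { t | rank L^t ⟨add M⟩ = rank L^{t+j} ⟨add M⟩ for all j ≥ 1 }`. -/
def phi (M : ModuleCat.{0} Λ) : ℕ :=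
  sInf {t : ℕ | ∀ j : ℕ, 1 ≤ j → syzygyRank Λ M (t + j) = syzygyRank Λ M t}

/-- `φdim Λ = sup { φ(M) | M a finitely generated Λ-module }`. -/
def phiDim : ℕ∞ := ⨆ M : FGMod Λ, (phi Λ M.1 : ℕ∞)

/-- Isomorphism of modules as a setoid on `ModuleCat Λ`. -/
def isoSetoid : Setoid (ModuleCat.{0} Λ) where
  r M N := Nonempty (M ≃ₗ[Λ] N)
  iseqv := ⟨fun M => ⟨LinearEquiv.refl Λ M⟩, fun ⟨e⟩ => ⟨e.symm⟩, fun ⟨e⟩ ⟨f⟩ => ⟨e.trans f⟩⟩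

/-- `α(X)`: the number of pairwise non-isomorphic, non-projective, indecomposable
direct summands of `X`. -/
def alpha (X : ModuleCat.{0} Λ) : ℕ :=
  Nat.card {c : Quotient (isoSetoid Λ) // ∃ Y : ModuleCat.{0} Λ,
    Quotient.mk (isoSetoid Λ) Y = c ∧ Indec Λ Y ∧ ¬ Module.Projective Λ Y ∧ IsSummand Λ Y X}

/-! ### Cyclic Nakayama algebras presented by monomial relations -/

/-- A cyclic Nakayama artin algebra `Λ` on `N ≥ 3` vertices, presented by an
irredundant system of `r` monomial relations `α_{k_{2j}} ⋯ α_{k_{2j-1}} = 0`.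

* `S i` (for `i : ZMod N`) are the simple modules attached to the vertices of the
  cyclic quiver, `P i` a projective cover of `S i`, and `c i` the composition length
  of `P i` (the Kupisch series).
* `layer` expresses that the arrows of the quiver are exactly `α_i : i → i+1`:
  the radical of an indecomposable module with top `S i`, when nonzero, has top `S (i+1)`.
* `kOdd j = k_{2j-1}` and `kEven j = k_{2j}` record the start and end indices of the
  `j`-th relation; irredundancy and completeness of the system of relations is recorded
  by `relation_starts` (the chain of inclusions `P_v ↪ P_{v-1}` breaks exactly at the
  starting vertices of the relations); `relation_ends` says that the `j`-th relation
  is a path from `k_{2j-1}` to `k_{2j} + 1` consisting of `c (k_{2j-1})` arrows. -/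
structure CyclicNakayama (R : Type) (Λ : Type) [CommRing R] [Ring Λ] [Algebra R Λ] where
  artinianBase : IsArtinianRing R
  finiteAlgebra : Module.Finite R Λ
  N : ℕ
  three_le_N : 3 ≤ N
  r : ℕ
  one_le_r : 1 ≤ r
  S : ZMod N → ModuleCat.{0} Λ
  S_simple : ∀ i, IsSimpleModule Λ (S i)
  S_complete : ∀ T : ModuleCat.{0} Λ, IsSimpleModule Λ T → ∃ i, Nonempty (T ≃ₗ[Λ] S i)
  S_distinct : ∀ i j, Nonempty (S i ≃ₗ[Λ] S j) → i = j
  nakayama : ∀ M : ModuleCat.{0} Λ, Module.Finite Λ M → Indec Λ M → IsUniserial Λ M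
  P : ZMod N → ModuleCat.{0} Λ
  P_finite : ∀ i, Module.Finite Λ (P i)
  P_projective : ∀ i, Module.Projective Λ (P i)
  P_cover : ∀ i, ∃ f : P i →ₗ[Λ] S i, IsProjCover Λ f
  c : ZMod N → ℕ
  P_length : ∀ i, HasLength Λ (P i) (c i)
  two_le_c : ∀ i, 2 ≤ c i
  layer : ∀ M : ModuleCat.{0} Λ, Module.Finite Λ M → Indec Λ M → ∀ i : ZMod N,
    TopIso Λ M (S i) → radical Λ M ≠ ⊥ →
      TopIso Λ (ModuleCat.of Λ (radical Λ M)) (S (i + 1))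
  kOdd : ZMod r → ZMod N
  kEven : ZMod r → ZMod N
  kOdd_mono : ∀ j j' : ZMod r, j.val < j'.val → (kOdd j).val < (kOdd j').val
  relation_starts : ∀ v : ZMod N, (∃ j, kOdd j = v) ↔ c v ≠ c (v + 1) + 1
  relation_ends : ∀ j, kEven j + 1 = kOdd j + (c (kOdd j) : ZMod N)
  soc_min : ∀ j, SocIso Λ (P (kOdd j)) (S (kEven j))
  soc_classes : ∀ v : ZMod N, ∃ j, SocIso Λ (P v) (S (kEven j))

variable {R : Type} [CommRing R]
variable {Λ} [Algebra R Λ]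

/-- `D` is (a representative of) the module `Δ_j`: a shortest indecomposable module
with top `S_{k_{2(j-1)} + 1}` and socle `S_{k_{2j}}`. -/
def IsDelta (pres : CyclicNakayama R Λ) (j : ZMod pres.r) (D : ModuleCat.{0} Λ) : Prop :=
  Module.Finite Λ D ∧ Indec Λ D ∧
    TopIso Λ D (pres.S (pres.kEven (j - 1) + 1)) ∧ SocIso Λ D (pres.S (pres.kEven j)) ∧
    ∀ D' : ModuleCat.{0} Λ, Module.Finite Λ D' → Indec Λ D' →
      TopIso Λ D' (pres.S (pres.kEven (j - 1) + 1)) → SocIso Λ D' (pres.S (pres.kEven j)) →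
      ∀ n n' : ℕ, HasLength Λ D n → HasLength Λ D' n' → n ≤ n'

/-- `M` is a `Δ`-module: it admits a finite filtration whose successive subquotients
are isomorphic to modules among `Δ_1, …, Δ_r`. -/
def IsDeltaModule (pres : CyclicNakayama R Λ) (Δ : ZMod pres.r → ModuleCat.{0} Λ)
    (M : ModuleCat.{0} Λ) : Prop :=
  ∃ (n : ℕ) (F : Fin (n + 1) → Submodule Λ M), Monotone F ∧ F 0 = ⊥ ∧ F (Fin.last n) = ⊤ ∧
    ∀ i : Fin n, ∃ j : ZMod pres.r,
      Nonempty ((F i.succ ⧸ Submodule.comap (F i.succ).subtype (F i.castSucc)) ≃ₗ[Λ] Δ j)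

end PhiDim

namespace PhiDim

/-! ### Uniserial modules and their composition series -/

section Uniserial

variable {Λ : Type} [Ring Λ]

lemma radical_eq_of_isCoatom {M : Type} [AddCommGroup M] [Module Λ M]
    (hM : ∀ N₁ N₂ : Submodule Λ M, N₁ ≤ N₂ ∨ N₂ ≤ N₁) {L : Submodule Λ M} (hL : IsCoatom L) :
    radical Λ M = L := by
  apply le_antisymm
  · refine sSup_le fun N hN => ?_
    rcases hM N L with h | h
    · exact h
    · rcases hL.le_iff.1 h with h | h
      · exact absurd h hN
      · exact h.le
  · exact le_sSup hL.1

lemma socle_eq_of_isAtom {M : Type} [AddCommGroup M] [Module Λ M]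
    (hM : ∀ N₁ N₂ : Submodule Λ M, N₁ ≤ N₂ ∨ N₂ ≤ N₁) {L : Submodule Λ M} (hL : IsAtom L) :
    socle Λ M = L := by
  apply le_antisymm
  · exact sInf_le hL.1
  · refine le_sInf fun N hN => ?_
    rcases hM N L with h | h
    · rcases hL.le_iff.1 h with h | h
      · exact absurd h hN
      · exact h.ge
    · exact h

lemma isCoatom_comap {M : Type} [AddCommGroup M] [Module Λ M] {K L : Submodule Λ M}
    (h : L ⋖ K) : IsCoatom (L.comap K.subtype) := by
  refine ⟨fun ht => ?_, fun X hX => ?_⟩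
  · exact h.lt.not_ge (Submodule.comap_subtype_eq_top.1 ht)
  · have h1 : L < X.map K.subtype := by
      have := (Submodule.map_lt_map_iff_of_injective (f := K.subtype)
        K.injective_subtype (p := L.comap K.subtype) (q := X)).2 hX
      rwa [Submodule.map_comap_subtype, inf_eq_right.2 h.le] at this
    have h2 : X.map K.subtype = K := by
      by_contra hne
      exact h.2 h1 (lt_of_le_of_ne (Submodule.map_subtype_le K X) hne)
    apply Submodule.map_injective_of_injective K.injective_subtype
    rw [h2, Submodule.map_subtype_top]

lemma isAtom_comap {M : Type} [AddCommGroup M] [Module Λ M] {K L : Submodule Λ M}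
    (h : IsAtom L) (hLK : L ≤ K) : IsAtom (L.comap K.subtype) := by
  have hm : (L.comap K.subtype).map K.subtype = L := by
    rw [Submodule.map_comap_subtype, inf_eq_right.2 hLK]
  refine ⟨fun ht => h.1 ?_, fun X hX => ?_⟩
  · rw [← hm, ht, Submodule.map_bot]
  · have := (Submodule.map_lt_map_iff_of_injective (f := K.subtype)
        K.injective_subtype (p := X) (q := L.comap K.subtype)).2 hX
    rw [hm] at this
    have := h.2 _ this
    exact Submodule.map_injective_of_injective K.injective_subtype
      (this.trans (Submodule.map_bot _).symm)

lemma uniserial_submodule {M : ModuleCat.{0} Λ} (hM : IsUniserial Λ M) (K : Submodule Λ M) :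
    IsUniserial Λ (ModuleCat.of Λ K) := by
  intro N₁ N₂
  rcases hM (N₁.map K.subtype) (N₂.map K.subtype) with h | h
  · exact Or.inl ((Submodule.map_le_map_iff_of_injective K.injective_subtype _ _).1 h)
  · exact Or.inr ((Submodule.map_le_map_iff_of_injective K.injective_subtype _ _).1 h)

lemma indec_of_uniserial {M : ModuleCat.{0} Λ} (hM : IsUniserial Λ M) (h : Nontrivial M) :
    Indec Λ M := by
  refine ⟨h, fun N N' hc => ?_⟩
  rcases hM N N' with h | h
  · exact Or.inl (hc.disjoint.eq_bot_of_le h)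
  · exact Or.inr (hc.disjoint.symm.eq_bot_of_le h)

lemma topIso_congr {M M' T : ModuleCat.{0} Λ} (e : M ≃ₗ[Λ] M') (h : TopIso Λ M T) :
    TopIso Λ M' T := by
  obtain ⟨f⟩ := h
  have : (radical Λ M).map (e : M →ₗ[Λ] M') = radical Λ M' := by
    have h1 := (Submodule.orderIsoMapComap e).map_sSup {N : Submodule Λ M | N ≠ ⊤}
    have h2 : (radical Λ M).map (e : M →ₗ[Λ] M') = Submodule.orderIsoMapComap e (radical Λ M) := rfl
    refine (h2.trans h1).trans ?_
    apply le_antisymm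
    · refine iSup₂_le fun N hN => le_sSup ?_
      simpa using hN
    · refine sSup_le fun N hN => ?_
      have : Submodule.orderIsoMapComap e ((Submodule.orderIsoMapComap e).symm N) = N :=
        OrderIso.apply_symm_apply _ _
      rw [← this]
      refine le_iSup₂_of_le ((Submodule.orderIsoMapComap e).symm N) ?_ le_rfl
      intro h
      apply hN
      rw [← this, h]
      exact map_top _
  exact ⟨(Submodule.Quotient.equiv _ _ e this).symm.trans f⟩

/-- For `L ⋖ K` in a uniserial module, the factor `K / L` is the top of `K`. -/
lemma topIso_iff_of_covBy {M : ModuleCat.{0} Λ} (hM : IsUniserial Λ M) {K L : Submodule Λ M}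
    (h : L ⋖ K) (T : ModuleCat.{0} Λ) :
    TopIso Λ (ModuleCat.of Λ K) T ↔ Nonempty ((K ⧸ L.comap K.subtype) ≃ₗ[Λ] T) := by
  have := radical_eq_of_isCoatom (uniserial_submodule hM K) (isCoatom_comap h)
  have e := Submodule.quotEquivOfEq _ _ this
  exact ⟨fun ⟨f⟩ => ⟨e.symm.trans f⟩, fun ⟨f⟩ => ⟨e.trans f⟩⟩

/-- In a uniserial module the members of a composition series are the only submodules. -/
lemma exists_eq_of_uniserial {M : ModuleCat.{0} Λ} (hM : IsUniserial Λ M)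
    (s : CompositionSeries (Submodule Λ M)) (h0 : s.head = ⊥) (h1 : s.last = ⊤)
    (X : Submodule Λ M) : ∃ i, s i = X := by
  by_contra hX
  push Not at hX
  have : ∀ i, s i ≤ X := by
    intro i
    induction i using Fin.induction with
    | zero => exact (le_of_eq h0).trans bot_le
    | succ i ih =>
      rcases hM (s i.succ) X with h | h
      · exact h
      · have hc : s i.castSucc ⋖ s i.succ := s.step i
        rcases hc.eq_or_eq ih h with h | h
        · exact absurd h.symm (hX _)
        · exact h.ge
  exact hX (Fin.last _) (le_antisymm (this _) ((le_top).trans (le_of_eq h1.symm)))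

lemma covBy_of_simple_factor {M : ModuleCat.{0} Λ} {N₁ : Submodule Λ M} {N₀ : Submodule Λ N₁}
    {T : ModuleCat.{0} Λ} (hT : IsSimpleModule Λ T) (e : (N₁ ⧸ N₀) ≃ₗ[Λ] T) :
    N₀.map N₁.subtype ⋖ N₁ := by
  have : IsSimpleModule Λ (N₁ ⧸ N₀) := IsSimpleModule.congr e
  rw [covBy_iff_quot_is_simple (Submodule.map_subtype_le _ _),
    Submodule.comap_map_eq_of_injective N₁.injective_subtype]
  exact this

end Uniserial

/-! ### Modules over a cyclic Nakayama algebra -/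

section Presented

variable {R Λ : Type} [CommRing R] [Ring Λ] [Algebra R Λ]

lemma artinian_ring (pres : CyclicNakayama R Λ) : IsArtinianRing Λ := by
  have := pres.artinianBase
  have := pres.finiteAlgebra
  exact IsArtinianRing.of_finite R Λ

/-- Consecutive radical layers of a uniserial module are attached to consecutive vertices. -/
lemma factor_succ (pres : CyclicNakayama R Λ) {M : ModuleCat.{0} Λ} (hf : Module.Finite Λ M)
    (hM : IsUniserial Λ M) {K L L' : Submodule Λ M} (h : L ⋖ K) (h' : L' ⋖ L)
    {a : ZMod pres.N} (ha : Nonempty ((K ⧸ L.comap K.subtype) ≃ₗ[Λ] pres.S a)) :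
    Nonempty ((L ⧸ L'.comap L.subtype) ≃ₗ[Λ] pres.S (a + 1)) := by
  have := artinian_ring pres
  have hK := uniserial_submodule hM K
  have hr := radical_eq_of_isCoatom hK (isCoatom_comap h)
  have hKn : Nontrivial K := Submodule.nontrivial_iff_ne_bot.2 h.lt.ne_bot
  have hne : radical Λ (ModuleCat.of Λ K) ≠ ⊥ := by
    intro hb
    have h2 : (L.comap K.subtype).map K.subtype = ⊥ := by
      rw [← hr]
      exact (congrArg (Submodule.map K.subtype) hb).trans (Submodule.map_bot _)
    rw [Submodule.map_comap_subtype, inf_eq_right.2 h.le] at h2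
    exact h'.lt.ne_bot h2
  have hfK : Module.Finite Λ (ModuleCat.of Λ K) := inferInstanceAs (Module.Finite Λ K)
  have ht := pres.layer (ModuleCat.of Λ K) hfK (indec_of_uniserial hK hKn)
    a ((topIso_iff_of_covBy hM h _).2 ha) hne
  rw [← topIso_iff_of_covBy hM h']
  refine topIso_congr (M := ModuleCat.of Λ (radical Λ (ModuleCat.of Λ K))) ?_ ht
  exact (LinearEquiv.ofEq _ _ hr).trans (Submodule.comapSubtypeEquivOfLe h.le)

lemma nonempty_factor_top {M T : ModuleCat.{0} Λ} {K L : Submodule Λ M} (hK : K = ⊤)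
    (h : Nonempty ((M ⧸ L) ≃ₗ[Λ] T)) : Nonempty ((K ⧸ L.comap K.subtype) ≃ₗ[Λ] T) := by
  subst hK
  obtain ⟨e⟩ := h
  refine ⟨(Submodule.Quotient.equiv _ _ Submodule.topEquiv ?_).trans e⟩
  ext x
  simp

lemma length_pos {M : ModuleCat.{0} Λ} (hM : Nontrivial M)
    (s : CompositionSeries (Submodule Λ M)) (h0 : s.head = ⊥) (h1 : s.last = ⊤) :
    0 < s.length := by
  have := Module.length_compositionSeries s h0 h1
  have h2 := Module.length_pos (R := Λ) (M := M)
  rw [← this] at h2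
  exact_mod_cast h2

/-- The `m`-th factor from the top in a composition series of a module with top `S a` is
`S (a + m)`. -/
lemma factor_iso (pres : CyclicNakayama R Λ) {M : ModuleCat.{0} Λ} (hf : Module.Finite Λ M)
    (hi : Indec Λ M) {a : ZMod pres.N} (ha : TopIso Λ M (pres.S a))
    (s : CompositionSeries (Submodule Λ M)) (h1 : s.last = ⊤) (m : ℕ) :
    ∀ i : Fin s.length, (i : ℕ) + m + 1 = s.length →
      Nonempty ((s i.succ ⧸ Submodule.comap (s i.succ).subtype (s i.castSucc)) ≃ₗ[Λ]
        pres.S (a + m)) := by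
  have hM := pres.nakayama M hf hi
  have hstep : ∀ i : Fin s.length, s i.castSucc ⋖ s i.succ := fun i => s.step i
  induction m with
  | zero =>
    intro i him
    have hl : i.succ = Fin.last _ := by ext; simpa using him
    have ht : s i.succ = ⊤ := by rw [hl]; exact h1
    apply nonempty_factor_top ht
    have hc : IsCoatom (s i.castSucc) := by
      rw [← covBy_top_iff, ← ht]; exact hstep i
    obtain ⟨f⟩ := ha
    rw [radical_eq_of_isCoatom hM hc] at f
    rw [Nat.cast_zero, add_zero]
    exact ⟨f⟩
  | succ m ih =>
    intro i him
    have hlt : (i : ℕ) + 1 < s.length := by omega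
    have := ih ⟨i + 1, hlt⟩ (by simp; omega)
    have h2 := factor_succ pres hf hM (hstep ⟨i + 1, hlt⟩) (hstep i) this
    rw [Nat.cast_succ, ← add_assoc]
    exact h2

lemma isAtom_series_one {M : ModuleCat.{0} Λ}
    (s : CompositionSeries (Submodule Λ M)) (h0 : s.head = ⊥) (hs : 0 < s.length) :
    IsAtom (s (Fin.succ ⟨0, hs⟩)) := by
  rw [← bot_covBy_iff, ← h0]
  exact s.step ⟨0, hs⟩

/-- A module with top `S a`, socle `S b` and length `n` satisfies `b = a + n - 1`, written without
subtraction. -/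
lemma soc_eq (pres : CyclicNakayama R Λ) {M : ModuleCat.{0} Λ} (hf : Module.Finite Λ M)
    (hi : Indec Λ M) {a b : ZMod pres.N} (ha : TopIso Λ M (pres.S a))
    (hb : SocIso Λ M (pres.S b))
    (s : CompositionSeries (Submodule Λ M)) (h0 : s.head = ⊥) (h1 : s.last = ⊤) :
    b + 1 = a + s.length := by
  have hs := length_pos hi.1 s h0 h1
  have hsoc := socle_eq_of_isAtom (pres.nakayama M hf hi) (isAtom_series_one s h0 hs)
  obtain ⟨e⟩ := factor_iso pres hf hi ha s h1 (s.length - 1) ⟨0, hs⟩ (by simp; omega)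
  obtain ⟨f⟩ := hb
  rw [hsoc] at f
  have hbot : Submodule.comap (s (Fin.succ ⟨0, hs⟩)).subtype (s (Fin.castSucc ⟨0, hs⟩)) = ⊥ := by
    have : s (Fin.castSucc ⟨0, hs⟩) = ⊥ := h0
    rw [this]; simp
  have g := (Submodule.quotEquivOfEqBot _ hbot).symm.trans e
  have := pres.S_distinct _ _ ⟨f.symm.trans g⟩
  rw [this, add_assoc]
  congr 1
  rw [← Nat.cast_succ]
  congr 1
  omega

/-- The composition factors of a module with top `S a` and length `n` are `S a, …, S (a + n - 1)`.
-/
lemma compFactor_iff (pres : CyclicNakayama R Λ) {M : ModuleCat.{0} Λ} (hf : Module.Finite Λ M)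
    (hi : Indec Λ M) {a : ZMod pres.N} (ha : TopIso Λ M (pres.S a))
    (s : CompositionSeries (Submodule Λ M)) (h0 : s.head = ⊥) (h1 : s.last = ⊤)
    (v : ZMod pres.N) :
    IsCompFactorOf Λ (pres.S v) M ↔ ∃ m : ℕ, m < s.length ∧ a + m = v := by
  have hM := pres.nakayama M hf hi
  constructor
  · rintro ⟨N₁, N₀, ⟨e⟩⟩
    have hc := covBy_of_simple_factor (pres.S_simple v) e
    obtain ⟨q, hq⟩ := exists_eq_of_uniserial hM s h0 h1 N₁
    obtain ⟨p, hp⟩ := exists_eq_of_uniserial hM s h0 h1 (N₀.map N₁.subtype)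
    have hN0 : N₀ = (s p).comap N₁.subtype := by
      rw [hp, Submodule.comap_map_eq_of_injective N₁.injective_subtype]
    rw [← hp] at hc
    subst hN0
    subst hq
    have hpq : p < q := s.strictMono.lt_iff_lt.1 hc.lt
    have hpl : (p : ℕ) < s.length := by have := q.2; omega
    have hq : q = Fin.succ ⟨p, hpl⟩ := by
      by_contra hne
      refine hc.2 (c := s (Fin.succ ⟨p, hpl⟩)) (s.strictMono ?_) (s.strictMono ?_)
      · rw [Fin.lt_def]; simp
      · rw [Fin.lt_def]
        rw [Fin.ext_iff] at hne
        rw [Fin.lt_def] at hpq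
        simp at hne ⊢; omega
    subst hq
    obtain ⟨f⟩ := factor_iso pres hf hi ha s h1 (s.length - 1 - p) ⟨p, hpl⟩ (by simp; omega)
    exact ⟨s.length - 1 - p, by omega, pres.S_distinct _ _ ⟨f.symm.trans e⟩⟩
  · rintro ⟨m, hm, rfl⟩
    exact ⟨_, _, factor_iso pres hf hi ha s h1 m ⟨s.length - 1 - m, by omega⟩ (by simp; omega)⟩

lemma compFactor_congr {T T' M : ModuleCat.{0} Λ} (e : T ≃ₗ[Λ] T')
    (h : IsCompFactorOf Λ T M) : IsCompFactorOf Λ T' M := by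
  obtain ⟨N₁, N₀, ⟨f⟩⟩ := h
  exact ⟨N₁, N₀, ⟨f.trans e⟩⟩

/-- Minimality of `Δ_j` bounds its length by the number of vertices: in a longer uniserial
module, the submodule `N` steps below the top has the same socle, and a top isomorphic to that
of the whole module. -/
lemma delta_length_le (pres : CyclicNakayama R Λ) {j : ZMod pres.r} {D : ModuleCat.{0} Λ}
    (hD : IsDelta pres j D)
    (s : CompositionSeries (Submodule Λ D)) (h0 : s.head = ⊥) (h1 : s.last = ⊤) :
    s.length ≤ pres.N := by
  by_contra! hlt
  have := artinian_ring pres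
  have hN := pres.three_le_N
  obtain ⟨hf, hi, ht, hsoc, hmin⟩ := hD
  have hM := pres.nakayama D hf hi
  have hs : 0 < s.length := by omega
  let i : Fin s.length := ⟨s.length - 1 - pres.N, by omega⟩
  set K := s i.succ with hKdef
  have hstep : s i.castSucc ⋖ K := s.step i
  have hKt : K ≠ ⊤ := by
    rw [← h1]
    refine (s.strictMono (a := i.succ) (b := Fin.last _) ?_).ne
    rw [Fin.lt_def]; simp [i]; omega
  have hK := uniserial_submodule hM K
  have hKn : Nontrivial K := Submodule.nontrivial_iff_ne_bot.2 hstep.lt.ne_bot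
  have hfK : Module.Finite Λ (ModuleCat.of Λ K) := inferInstanceAs (Module.Finite Λ K)
  have htop : TopIso Λ (ModuleCat.of Λ K) (pres.S (pres.kEven (j - 1) + 1)) := by
    rw [topIso_iff_of_covBy hM hstep]
    have := factor_iso pres hf hi ht s h1 pres.N i (by simp [i]; omega)
    rwa [ZMod.natCast_self, add_zero] at this
  have hat := isAtom_series_one s h0 hs
  have hle : s (Fin.succ ⟨0, hs⟩) ≤ K := s.strictMono.monotone (by rw [Fin.le_def]; simp)
  have hsocK : SocIso Λ (ModuleCat.of Λ K) (pres.S (pres.kEven j)) := by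
    obtain ⟨f⟩ := hsoc
    rw [socle_eq_of_isAtom hM hat] at f
    have h2 := socle_eq_of_isAtom hK (isAtom_comap hat hle)
    exact ⟨((LinearEquiv.ofEq _ _ h2).trans (Submodule.comapSubtypeEquivOfLe hle)).trans f⟩
  obtain ⟨t, t0, t1⟩ := exists_compositionSeries_of_isNoetherian_isArtinian Λ K
  have hle := hmin (ModuleCat.of Λ K) hfK (indec_of_uniserial hK hKn) htop hsocK
    s.length t.length ⟨s, h0, h1, rfl⟩ ⟨t, t0, t1, rfl⟩
  have hl := Submodule.length_lt hKt
  rw [← Module.length_compositionSeries t t0 t1, ← Module.length_compositionSeries s h0 h1] at hl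
  have : t.length < s.length := by exact_mod_cast hl
  omega

lemma ker_isCoatom {P T : ModuleCat.{0} Λ} (hT : IsSimpleModule Λ T) {f : P →ₗ[Λ] T}
    (hf : Function.Surjective f) : IsCoatom (LinearMap.ker f) := by
  rw [← isSimpleModule_iff_isCoatom]
  exact IsSimpleModule.congr (f.quotKerEquivOfSurjective hf)

/-- A projective cover of a simple module is local, with the kernel as largest proper submodule. -/
lemma le_ker_of_ne_top {P T : ModuleCat.{0} Λ} (hT : IsSimpleModule Λ T) {f : P →ₗ[Λ] T}
    (hf : IsProjCover Λ f) {N : Submodule Λ P} (hN : N ≠ ⊤) : N ≤ LinearMap.ker f := by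
  by_contra h
  apply hN
  apply hf.2.2
  exact (ker_isCoatom hT hf.2.1).2 _ (right_lt_sup.2 h)

lemma radical_projCover {P T : ModuleCat.{0} Λ} (hT : IsSimpleModule Λ T) {f : P →ₗ[Λ] T}
    (hf : IsProjCover Λ f) : radical Λ P = LinearMap.ker f :=
  le_antisymm (sSup_le fun _ hN => le_ker_of_ne_top hT hf hN)
    (le_sSup (ker_isCoatom hT hf.2.1).1)

lemma indec_projCover {P T : ModuleCat.{0} Λ} (hT : IsSimpleModule Λ T) {f : P →ₗ[Λ] T}
    (hf : IsProjCover Λ f) : Indec Λ P := by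
  have hk := ker_isCoatom hT hf.2.1
  constructor
  · have := hT.nontrivial
    exact hf.2.1.nontrivial
  · intro N N' hc
    by_cases hN : N = ⊤
    · right
      subst hN
      exact hc.disjoint.symm.eq_bot_of_le le_top
    · by_cases hN' : N' = ⊤
      · left
        subst hN'
        exact hc.disjoint.eq_bot_of_le le_top
      · refine absurd (top_le_iff.1 ?_) hk.1
        rw [← hc.sup_eq_top]
        exact sup_le (le_ker_of_ne_top hT hf hN) (le_ker_of_ne_top hT hf hN')

/-- The Kupisch inequality: `P (v + 1)` is a projective cover of `rad P v`, so
`c v - 1 ≤ c (v + 1)`. -/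
lemma kupisch (pres : CyclicNakayama R Λ) (v : ZMod pres.N) :
    pres.c v ≤ pres.c (v + 1) + 1 := by
  have := artinian_ring pres
  obtain ⟨f, hf⟩ := pres.P_cover v
  obtain ⟨g, hg⟩ := pres.P_cover (v + 1)
  have hfin := pres.P_finite v
  have hSv := pres.S_simple v
  have hSv' := pres.S_simple (v + 1)
  have hi := indec_projCover hSv hf
  have hrad := radical_projCover hSv hf
  have hlen : Module.length Λ (pres.P v) = pres.c v := by
    obtain ⟨s, h0, h1, hs⟩ := pres.P_length v
    rw [← hs, Module.length_compositionSeries s h0 h1]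
  have hlen' : Module.length Λ (pres.P (v + 1)) = pres.c (v + 1) := by
    obtain ⟨s, h0, h1, hs⟩ := pres.P_length (v + 1)
    rw [← hs, Module.length_compositionSeries s h0 h1]
  have hadd : Module.length Λ (pres.P v) = Module.length Λ (LinearMap.ker f) + 1 := by
    rw [Module.length_eq_add_of_exact (LinearMap.ker f).subtype f
      (LinearMap.ker f).injective_subtype hf.2.1 (LinearMap.exact_subtype_ker_map f),
      Module.length_eq_one Λ (pres.S v)]
  have hne : radical Λ (pres.P v) ≠ ⊥ := by
    intro hb
    rw [hrad] at hb
    rw [hb, hlen, Module.length_bot] at hadd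
    have h2 := pres.two_le_c v
    have : pres.c v = 1 := by exact_mod_cast (by simpa using hadd : (pres.c v : ℕ∞) = 1)
    omega
  have htop : TopIso Λ (pres.P v) (pres.S v) :=
    ⟨(Submodule.quotEquivOfEq _ _ hrad).trans (f.quotKerEquivOfSurjective hf.2.1)⟩
  obtain ⟨e⟩ := pres.layer (pres.P v) hfin hi v htop hne
  let Q := ModuleCat.of Λ (radical Λ (pres.P v))
  let π : Q →ₗ[Λ] pres.S (v + 1) := e.toLinearMap ∘ₗ (radical Λ Q).mkQ
  have hπ : Function.Surjective π := e.surjective.comp (Submodule.mkQ_surjective _)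
  have hproj := pres.P_projective (v + 1)
  obtain ⟨h, hh⟩ := Module.projective_lifting_property π g hπ
  have hsurj : Function.Surjective h := by
    rw [← LinearMap.range_eq_top]
    by_contra hr
    -- A proper image would lie in the radical, on which `π` vanishes.
    have hle : LinearMap.range h ≤ radical Λ Q := le_sSup hr
    have hg0 : g = 0 := by
      rw [← hh]
      ext x
      have : h x ∈ radical Λ Q := hle ⟨x, rfl⟩
      simp [π, (Submodule.Quotient.mk_eq_zero _).2 this]
    have := hSv'.nontrivial
    obtain ⟨y, hy⟩ := exists_ne (0 : pres.S (v + 1))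
    obtain ⟨x, rfl⟩ := hg.2.1 y
    simp [hg0] at hy
  have hle := Module.length_le_of_surjective h hsurj
  have hQ : Module.length Λ Q = Module.length Λ (LinearMap.ker f) :=
    (LinearEquiv.ofEq _ _ hrad).length_eq
  rw [hQ, hlen'] at hle
  have : (pres.c v : ℕ∞) ≤ pres.c (v + 1) + 1 := by
    rw [← hlen, hadd]; gcongr
  exact_mod_cast this

end Presented

end PhiDim

namespace PhiDim

/-! ### Arcs on the cycle -/

section Arc

lemma le_of_cast_eq {N n d : ℕ} (hn : n ≤ N) (hd : 1 ≤ d) (h : (n : ZMod N) = d) : n ≤ d := by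
  by_contra! hlt
  have h1 := (ZMod.natCast_eq_natCast_iff _ _ _).1 h
  have h2 := (Nat.modEq_iff_dvd' hlt.le).1 h1.symm
  have := Nat.le_of_dvd (by omega) h2
  omega

/-- If `f` is constant along each step whose source is not a value of `k`, then `f` takes the
same value at `k (j + 1)` as just after `k j`. -/
lemma const_between {N r : ℕ} [NeZero N] [NeZero r] {A : Type*} (k : ZMod r → ZMod N)
    (hk : ∀ j j' : ZMod r, j.val < j'.val → (k j).val < (k j').val)
    (f : ZMod N → A) (hf : ∀ v, (∀ j, k j ≠ v) → f (v + 1) = f v) (j : ZMod r) :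
    f (k (j + 1)) = f (k j + 1) := by
  have key : ∀ b : ℕ, (k j).val + 1 ≤ b →
      (∀ x : ℕ, (k j).val < x → x < b → ∀ l, k l ≠ (x : ZMod N)) →
      f (b : ZMod N) = f (k j + 1) := by
    intro b hb
    induction b, hb using Nat.le_induction with
    | base => intro _; simp
    | succ b hb ih =>
      intro hx
      rw [Nat.cast_succ, hf _ (hx b (by omega) (by omega))]
      exact ih fun x h1 h2 => hx x h1 (by omega)
  have hr : 0 < r := Nat.pos_of_ne_zero (NeZero.ne r)
  by_cases hj : j.val + 1 < r
  · have hv : (j + 1).val = j.val + 1 := by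
      rw [ZMod.val_add, ZMod.val_one_eq_one_mod, Nat.add_mod_mod, Nat.mod_eq_of_lt hj]
    have h := key (k (j + 1)).val (hk _ _ (by omega)) ?_
    · simpa using h
    · rintro x hx1 hx2 l hlx
      have hxN : x < N := hx2.trans (ZMod.val_lt _)
      have hl : (k l).val = x := by rw [hlx, ZMod.val_natCast, Nat.mod_eq_of_lt hxN]
      rcases lt_trichotomy l.val j.val with h | h | h
      · have := hk _ _ h; omega
      · rw [ZMod.val_injective r h] at hl; omega
      · rcases eq_or_lt_of_le (show (j + 1).val ≤ l.val by omega) with h | h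
        · rw [← ZMod.val_injective r h] at hl; omega
        · have := hk _ _ h; omega
  · -- The step from the last value of `k` to the first one wraps around the cycle.
    have hjr : j.val + 1 = r := by have := ZMod.val_lt j; omega
    have hv : (j + 1).val = 0 := by
      rw [ZMod.val_add, ZMod.val_one_eq_one_mod, Nat.add_mod_mod, hjr, Nat.mod_self]
    have h := key (N + (k (j + 1)).val) (by have := ZMod.val_lt (k j); omega) ?_
    · simpa using h
    · rintro x hx1 hx2 l hlx
      have hl : (k l).val = x % N := by rw [hlx, ZMod.val_natCast]
      have hlr := ZMod.val_lt l
      by_cases hxN : x < N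
      · rw [Nat.mod_eq_of_lt hxN] at hl
        rcases eq_or_lt_of_le (show l.val ≤ j.val by omega) with h | h
        · rw [ZMod.val_injective r h] at hl; omega
        · have := hk _ _ h; omega
      · have hm : x % N = x - N := by
          have := ZMod.val_lt (k (j + 1))
          rw [Nat.mod_eq_sub_mod (by omega), Nat.mod_eq_of_lt (by omega)]
        rw [hm] at hl
        rcases Nat.eq_zero_or_pos l.val with h | h
        · rw [ZMod.val_injective r (h.trans hv.symm)] at hl; omega
        · have := hk (j + 1) l (by omega); omega

/-- The arcs `k_{2(j-1)} + 1, …, k_{2j}`, of lengths `n j`, partition the vertices of the cycle.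
They cover it because each one starts where the previous one stops, and they cannot overlap because
their lengths add up to at most `N`. -/
lemma arcs_bijective {N r : ℕ} [NeZero N] [NeZero r] (c : ZMod N → ℕ)
    (kOdd kEven : ZMod r → ZMod N) (hc : ∀ v, c v ≤ c (v + 1) + 1)
    (hmono : ∀ j j' : ZMod r, j.val < j'.val → (kOdd j).val < (kOdd j').val)
    (hstart : ∀ v, (∃ j, kOdd j = v) ↔ c v ≠ c (v + 1) + 1)
    (hend : ∀ j, kEven j + 1 = kOdd j + (c (kOdd j) : ZMod N))
    (n : ZMod r → ℕ) (hn1 : ∀ j, 1 ≤ n j) (hnN : ∀ j, n j ≤ N)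
    (hn : ∀ j, kEven (j - 1) + n j = kEven j) :
    Function.Bijective (fun p : Σ j, Fin (n j) => kEven (p.1 - 1) + 1 + ((p.2 : ℕ) : ZMod N)) := by
  set F := fun p : Σ j, Fin (n j) => kEven (p.1 - 1) + 1 + ((p.2 : ℕ) : ZMod N)
  -- The union of the arcs is closed under `v ↦ v + 1`.
  have hclosed : ∀ p, ∃ q, F q = F p + 1 := by
    rintro ⟨j, i⟩
    by_cases hi : (i : ℕ) + 1 < n j
    · exact ⟨⟨j, ⟨i + 1, hi⟩⟩, by simp [F, add_assoc]⟩
    · refine ⟨⟨j + 1, ⟨0, hn1 _⟩⟩, ?_⟩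
      have hi' : n j = i + 1 := by have := i.2; omega
      have := hn j
      rw [hi'] at this
      simp only [F, add_sub_cancel_right, ← this]
      push_cast
      ring
  have hsurj : Function.Surjective F := by
    let p₀ : Σ j, Fin (n j) := ⟨0, ⟨0, hn1 0⟩⟩
    have : ∀ m : ℕ, ∃ q, F q = F p₀ + m := by
      intro m
      induction m with
      | zero => exact ⟨p₀, by simp⟩
      | succ m ih =>
        obtain ⟨q, hq⟩ := ih
        obtain ⟨q', hq'⟩ := hclosed q
        exact ⟨q', by rw [hq', hq]; push_cast; ring⟩
    intro v
    obtain ⟨q, hq⟩ := this (v - F p₀).val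
    exact ⟨q, by rw [hq]; simp⟩
  -- The jumps of `v ↦ v + c v` add up to one turn around the cycle and dominate the arc lengths.
  have hkinj : Function.Injective kOdd := by
    intro a b hab
    apply ZMod.val_injective r
    rcases lt_trichotomy a.val b.val with h | h | h
    · have := hmono _ _ h; rw [hab] at this; omega
    · exact h
    · have := hmono _ _ h; rw [hab] at this; omega
  let d : ZMod N → ℕ := fun v => c (v + 1) + 1 - c v
  have hdc : ∀ v, d v + c v = c (v + 1) + 1 := fun v => Nat.sub_add_cancel (hc v)
  have hdsum : ∑ v, d v = N := by
    have h1 : ∑ v, (d v + c v) = ∑ v, (c (v + 1) + 1) := Finset.sum_congr rfl fun v _ => hdc v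
    rw [Finset.sum_add_distrib, Finset.sum_add_distrib] at h1
    have h2 : ∑ v, c (v + 1) = ∑ v, c v := Equiv.sum_comp (Equiv.addRight (1 : ZMod N)) c
    rw [h2] at h1
    simp only [Finset.sum_const, Finset.card_univ, ZMod.card, smul_eq_mul, mul_one] at h1
    omega
  have hle : ∀ j, n (j + 1) ≤ d (kOdd j) := by
    intro j
    have hstep : ∀ v : ZMod N, v + 1 + (c (v + 1) : ZMod N) = v + c v + d v := by
      intro v
      have := congrArg (Nat.cast (R := ZMod N)) (hdc v)
      push_cast at this
      linear_combination -this
    refine le_of_cast_eq (hnN _) ?_ ?_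
    · have := (hstart (kOdd j)).1 ⟨j, rfl⟩
      have := hdc (kOdd j)
      omega
    · have h1 := const_between kOdd hmono (fun v => v + (c v : ZMod N)) (fun v hv => by
        have h0 : d v = 0 := by
          have := (not_congr (hstart v)).1 (by simpa using hv)
          have := hdc v
          omega
        simpa [h0] using hstep v) j
      rw [hstep, ← hend, ← hend] at h1
      have h2 := hn (j + 1)
      rw [add_sub_cancel_right] at h2
      linear_combination h2 + h1
  have hsum : ∑ j, n j ≤ N := by
    calc ∑ j, n j = ∑ j, n (j + 1) := (Equiv.sum_comp (Equiv.addRight (1 : ZMod r)) n).symm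
      _ ≤ ∑ j, d (kOdd j) := Finset.sum_le_sum fun j _ => hle j
      _ = ∑ v ∈ Finset.univ.map ⟨kOdd, hkinj⟩, d v := by rw [Finset.sum_map]; rfl
      _ ≤ ∑ v, d v := Finset.sum_le_sum_of_subset (Finset.subset_univ _)
      _ = N := hdsum
  refine hsurj.bijective_of_nat_card_le ?_
  simpa [Nat.card_eq_fintype_card] using hsum

end Arc

/-- The sets of simple composition factors of distinct `Δ_i`, `Δ_j` are disjoint, and
every simple module appears exactly once in the union of the composition factors of
`Δ_1, …, Δ_r`. -/
theorem delta_comp_factors {R Λ : Type} [CommRing R] [Ring Λ] [Algebra R Λ]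
    (pres : CyclicNakayama R Λ)
    (Δ : ZMod pres.r → ModuleCat.{0} Λ) (hΔ : ∀ j, IsDelta pres j (Δ j)) :
    (∀ i j : ZMod pres.r, i ≠ j → ∀ T : ModuleCat.{0} Λ, IsSimpleModule Λ T →
      IsCompFactorOf Λ T (Δ i) → ¬ IsCompFactorOf Λ T (Δ j)) ∧
    (∀ v : ZMod pres.N, ∃! j : ZMod pres.r, IsCompFactorOf Λ (pres.S v) (Δ j)) ∧
    (∀ (v : ZMod pres.N) (j : ZMod pres.r)
        (s : CompositionSeries (Submodule Λ (Δ j))), s.head = ⊥ → s.last = ⊤ →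
      factorCount Λ (Δ j) s (pres.S v) ≤ 1) := by
  have := artinian_ring pres
  have : NeZero pres.N := ⟨by have := pres.three_le_N; omega⟩
  have : NeZero pres.r := ⟨by have := pres.one_le_r; omega⟩
  have hfin : ∀ j, Module.Finite Λ (Δ j) := fun j => (hΔ j).1
  choose σ h0 h1 using fun j => exists_compositionSeries_of_isNoetherian_isArtinian Λ (Δ j)
  have hbij := arcs_bijective pres.c pres.kOdd pres.kEven (kupisch pres) pres.kOdd_mono
    pres.relation_starts pres.relation_ends (fun j => (σ j).length)
    (fun j => length_pos (hΔ j).2.1.1 (σ j) (h0 j) (h1 j))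
    (fun j => delta_length_le pres (hΔ j) (σ j) (h0 j) (h1 j))
    (fun j => by
      have := soc_eq pres (hΔ j).1 (hΔ j).2.1 (hΔ j).2.2.1 (hΔ j).2.2.2.1 (σ j) (h0 j) (h1 j)
      linear_combination -this)
  have hiff : ∀ v j, IsCompFactorOf Λ (pres.S v) (Δ j) ↔
      ∃ m : ℕ, m < (σ j).length ∧ pres.kEven (j - 1) + 1 + m = v := fun v j =>
    compFactor_iff pres (hΔ j).1 (hΔ j).2.1 (hΔ j).2.2.1 (σ j) (h0 j) (h1 j) v
  have huniq : ∀ v i j, IsCompFactorOf Λ (pres.S v) (Δ i) → IsCompFactorOf Λ (pres.S v) (Δ j) →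
      i = j := by
    intro v i j hi hj
    obtain ⟨m, hm, hmv⟩ := (hiff v i).1 hi
    obtain ⟨m', hm', hmv'⟩ := (hiff v j).1 hj
    exact congrArg Sigma.fst (@hbij.1 ⟨i, ⟨m, hm⟩⟩ ⟨j, ⟨m', hm'⟩⟩ (hmv.trans hmv'.symm))
  refine ⟨?_, ?_, ?_⟩
  · intro i j hij T hT hi hj
    obtain ⟨v, ⟨e⟩⟩ := pres.S_complete T hT
    exact hij (huniq v i j (compFactor_congr e hi) (compFactor_congr e hj))
  · intro v
    obtain ⟨⟨j, m⟩, hjm⟩ := hbij.2 v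
    have hj := (hiff v j).2 ⟨m, m.2, hjm⟩
    exact ⟨j, hj, fun i hi => huniq v i j hi hj⟩
  · intro v j s hs0 hs1
    rw [factorCount, Finite.card_le_one_iff_subsingleton]
    refine ⟨fun ⟨i, ⟨e⟩⟩ ⟨i', ⟨e'⟩⟩ => Subtype.ext ?_⟩
    have hN := delta_length_le pres (hΔ j) s hs0 hs1
    obtain ⟨f⟩ := factor_iso pres (hΔ j).1 (hΔ j).2.1 (hΔ j).2.2.1 s hs1 (s.length - 1 - i) i
      (by omega)
    obtain ⟨f'⟩ := factor_iso pres (hΔ j).1 (hΔ j).2.1 (hΔ j).2.2.1 s hs1 (s.length - 1 - i') i'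
      (by omega)
    have h2 := (pres.S_distinct _ _ ⟨f.symm.trans e⟩).trans
      (pres.S_distinct _ _ ⟨f'.symm.trans e'⟩).symm
    have h3 := (ZMod.natCast_eq_natCast_iff _ _ _).1 (add_left_cancel h2)
    have h4 := Nat.ModEq.eq_of_lt_of_lt h3 (by omega) (by omega)
    have hi := i.2
    have hi' := i'.2
    exact Fin.ext (show (i : ℕ) = i' by omega)

end PhiDim
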